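/- Let G be a finite connected simple graph with a cut-partition 𝒞 such that no shortest path in G uses two edges of the same cut C ∈ 𝒞. Then a vertex set V' ⊆ V(G) is a hull set of G if and only if for every cut C ∈ 𝒞, both sides of C contain a vertex of V'. -/

import Mathlib

/-- A set of vertices is (geodesically) convex. -/
def GConvex {V : Type*} (G : SimpleGraph V) (S : Set V) : Prop :=
  ∀ u ∈ S, ∀ w ∈ S, ∀ x : V, G.dist u x + G.dist x w = G.dist u w → x ∈ S

/-- The convex hull of a set of vertices: the smallest convex set containing it. -/
def GConvexHull {V : Type*} (G : SimpleGraph V) (S : Set V) : Set V :=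
  ⋂₀ {T : Set V | GConvex G T ∧ S ⊆ T}

/-- A cut of a connected simple graph: an inclusion-minimal set of edges whose
removal disconnects the graph. -/
def IsCut {V : Type*} (G : SimpleGraph V) (C : Set (Sym2 V)) : Prop :=
  C ⊆ G.edgeSet ∧ ¬ (G.deleteEdges C).Connected ∧
    ∀ C' : Set (Sym2 V), C' ⊂ C → (G.deleteEdges C').Connected

/-- A cut-partition: a set of cuts partitioning the edge set. -/
def IsCutPartition {V : Type*} (G : SimpleGraph V) (𝒞 : Set (Set (Sym2 V))) : Prop :=
  (∀ C ∈ 𝒞, IsCut G C) ∧ 𝒞.PairwiseDisjoint id ∧ ⋃₀ 𝒞 = G.edgeSet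

/-- A side of a cut `C`: the vertex set of a connected component of `G` minus `C`. -/
def IsSide {V : Type*} (G : SimpleGraph V) (C : Set (Sym2 V)) (S : Set V) : Prop :=
  ∃ x : V, S = {y : V | (G.deleteEdges C).Reachable y x}

open Classical in
/-- The number of edges of a walk (with multiplicity) belonging to a given edge set. -/
noncomputable def cutUse {V : Type*} (G : SimpleGraph V) {u w : V} (p : G.Walk u w)
    (C : Set (Sym2 V)) : ℕ :=
  p.edges.countP fun e => decide (e ∈ C)

/-!
Under the hypothesis on shortest paths, `d(u, w)` is the number of cuts separating `u` from `w`: a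
shortest path uses exactly one edge of each separating cut and no edge of any other cut.

A side avoided by `V'` has a convex complement, because a shortest path entering and leaving that
side would use the cut twice. Conversely, a convex set `T ≠ V(G)` has an edge `ab` with `a ∈ T`,
`b ∉ T`. If `T` contained a vertex `v` on the side of `b` of the cut containing `ab`, then exactly
one more cut would separate `v` from `a` than from `b`, so `b` would lie on a shortest path from `a`
to `v`, against convexity.
-/

open SimpleGraph

section

variable {V : Type*} {G : SimpleGraph V} {C : Set (Sym2 V)}

theorem cutUse_cons_of_mem {u v w : V} (h : G.Adj u v) (p : G.Walk v w) (he : s(u, v) ∈ C) :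
    cutUse G (.cons h p) C = cutUse G p C + 1 := by
  simp [cutUse, he]

theorem cutUse_le_cutUse_cons {u v w : V} (h : G.Adj u v) (p : G.Walk v w) :
    cutUse G p C ≤ cutUse G (.cons h p) C :=
  (List.sublist_cons_self _ _).countP_le

theorem cutUse_append {u v w : V} (p : G.Walk u v) (q : G.Walk v w) :
    cutUse G (p.append q) C = cutUse G p C + cutUse G q C := by
  simp [cutUse, Walk.edges_append]

theorem reachable_deleteEdges_of_cutUse_eq_zero {u w : V} {p : G.Walk u w}
    (hp : cutUse G p C = 0) : (G.deleteEdges C).Reachable u w := by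
  have hedges : ∀ e ∈ p.edges, e ∉ C := by simpa [cutUse, List.countP_eq_zero] using hp
  exact ⟨p.toDeleteEdges C hedges⟩

theorem cutUse_pos_of_not_reachable {u w : V} (p : G.Walk u w)
    (h : ¬ (G.deleteEdges C).Reachable u w) : 0 < cutUse G p C :=
  Nat.pos_of_ne_zero fun hp => h (reachable_deleteEdges_of_cutUse_eq_zero hp)

theorem IsSide.nonempty {S : Set V} (hS : IsSide G C S) : S.Nonempty := by
  obtain ⟨s, rfl⟩ := hS
  exact ⟨s, .refl s⟩

theorem IsSide.gConvex_compl (hconn : G.Connected)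
    (hgeo : ∀ (u w : V) (p : G.Walk u w), p.length = G.dist u w → cutUse G p C ≤ 1)
    {S : Set V} (hS : IsSide G C S) : GConvex G Sᶜ := by
  obtain ⟨s, rfl⟩ := hS
  intro u hu w hw x hx hxS
  obtain ⟨p, hp⟩ := hconn.exists_walk_length_eq_dist u x
  obtain ⟨q, hq⟩ := hconn.exists_walk_length_eq_dist x w
  have hle : cutUse G p C + cutUse G q C ≤ 1 := by
    rw [← cutUse_append]
    exact hgeo u w _ (by rw [Walk.length_append, hp, hq, hx])
  have hpC : 0 < cutUse G p C := cutUse_pos_of_not_reachable p fun h => hu (h.trans hxS)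
  have hqC : 0 < cutUse G q C := cutUse_pos_of_not_reachable q fun h => hw (h.symm.trans hxS)
  omega

theorem gConvexHull_eq_univ_iff {S : Set V} :
    GConvexHull G S = Set.univ ↔ ∀ T, GConvex G T → S ⊆ T → T = Set.univ := by
  simp only [GConvexHull, Set.sInter_eq_univ, Set.mem_ofPred_eq, and_imp]

/-- A multicut: an edge set `C` each of whose edges joins two different components of `G` minus `C`.
It may leave more than two components. -/
def IsMulticut (G : SimpleGraph V) (C : Set (Sym2 V)) : Prop :=
  ∀ ⦃a b : V⦄, s(a, b) ∈ C → ¬ (G.deleteEdges C).Reachable a b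

theorem IsCut.isMulticut (hC : IsCut G C) : IsMulticut G C := by
  intro a b he hab
  have hdelete : (G.deleteEdges (C \ {s(a, b)})).deleteEdges {s(a, b)} = G.deleteEdges C := by
    rw [deleteEdges_deleteEdges, Set.sdiff_union_of_subset (Set.singleton_subset_iff.2 he)]
  have hbridge : ¬ (G.deleteEdges (C \ {s(a, b)})).IsBridge s(a, b) := by
    rwa [isBridge_iff, hdelete, not_not]
  have hconn : (G.deleteEdges (C \ {s(a, b)})).Connected :=
    hC.2.2 _ (Set.sdiff_singleton_ssubset.2 he)
  exact hC.2.1 (hdelete ▸ hconn.connected_delete_edge_of_not_isBridge hbridge)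

/-- A partition of the edge set of `G` into multicuts, generalizing cut-partitions. As in
`IsCutPartition`, the empty set is not excluded from `𝒞`. -/
structure IsMulticutPartition (G : SimpleGraph V) (𝒞 : Set (Set (Sym2 V))) : Prop where
  isMulticut : ∀ C ∈ 𝒞, IsMulticut G C
  pairwiseDisjoint : 𝒞.PairwiseDisjoint id
  sUnion_eq : ⋃₀ 𝒞 = G.edgeSet

theorem IsCutPartition.isMulticutPartition {𝒞 : Set (Set (Sym2 V))} (h𝒞 : IsCutPartition G 𝒞) :
    IsMulticutPartition G 𝒞 :=
  ⟨fun C hC => (h𝒞.1 C hC).isMulticut, h𝒞.2.1, h𝒞.2.2⟩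

/-- The members of `𝒞` that separate `u` from `w`, i.e. have `u` and `w` on different sides. -/
def separatingCuts (G : SimpleGraph V) (𝒞 : Set (Set (Sym2 V))) (u w : V) : Set (Set (Sym2 V)) :=
  {C ∈ 𝒞 | ¬ (G.deleteEdges C).Reachable u w}

namespace IsMulticutPartition

variable {𝒞 : Set (Set (Sym2 V))} {a b v : V}

theorem exists_mem_of_adj (h𝒞 : IsMulticutPartition G 𝒞) (hab : G.Adj a b) :
    ∃ C ∈ 𝒞, s(a, b) ∈ C := by
  rwa [← Set.mem_sUnion, h𝒞.sUnion_eq]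

theorem adj_of_mem (h𝒞 : IsMulticutPartition G 𝒞) (hC : C ∈ 𝒞) (he : s(a, b) ∈ C) : G.Adj a b := by
  rw [← mem_edgeSet, ← h𝒞.sUnion_eq]
  exact Set.mem_sUnion_of_mem he hC

theorem reachable_deleteEdges_of_ne (h𝒞 : IsMulticutPartition G 𝒞) (hC : C ∈ 𝒞)
    (he : s(a, b) ∈ C) {D : Set (Sym2 V)} (hD : D ∈ 𝒞) (hne : D ≠ C) :
    (G.deleteEdges D).Reachable a b := by
  have heD : s(a, b) ∉ D := (h𝒞.pairwiseDisjoint hC hD hne.symm).notMem_of_mem_left he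
  exact (deleteEdges_adj.2 ⟨h𝒞.adj_of_mem hC he, heD⟩).reachable

theorem separatingCuts_eq_insert (h𝒞 : IsMulticutPartition G 𝒞) (hC : C ∈ 𝒞)
    (he : s(a, b) ∈ C) (hbv : (G.deleteEdges C).Reachable b v) :
    separatingCuts G 𝒞 a v = insert C (separatingCuts G 𝒞 b v) := by
  have hav : ¬ (G.deleteEdges C).Reachable a v := fun hav =>
    h𝒞.isMulticut C hC he (hav.trans hbv.symm)
  ext D
  by_cases hDC : D = C
  · subst hDC
    simp [separatingCuts, hC, hav]
  · have hiff (hD : D ∈ 𝒞) : (G.deleteEdges D).Reachable a v ↔ (G.deleteEdges D).Reachable b v :=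
      have hab := h𝒞.reachable_deleteEdges_of_ne hC he hD hDC
      ⟨hab.symm.trans, hab.trans⟩
    simp +contextual [separatingCuts, hDC, hiff]

theorem encard_separatingCuts_eq_add_one (h𝒞 : IsMulticutPartition G 𝒞) (hC : C ∈ 𝒞)
    (he : s(a, b) ∈ C) (hbv : (G.deleteEdges C).Reachable b v) :
    (separatingCuts G 𝒞 a v).encard = (separatingCuts G 𝒞 b v).encard + 1 := by
  rw [h𝒞.separatingCuts_eq_insert hC he hbv, Set.encard_insert_of_notMem fun h => h.2 hbv]

theorem encard_separatingCuts_eq_length (h𝒞 : IsMulticutPartition G 𝒞) {u w : V} {p : G.Walk u w}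
    (hp : ∀ C ∈ 𝒞, cutUse G p C ≤ 1) : (separatingCuts G 𝒞 u w).encard = p.length := by
  induction p with
  | nil => simp [separatingCuts]
  | cons h p ih =>
    obtain ⟨C, hC, he⟩ := h𝒞.exists_mem_of_adj h
    have hpC : cutUse G p C = 0 := by
      have hle := hp C hC
      rw [cutUse_cons_of_mem h p he] at hle
      omega
    rw [h𝒞.encard_separatingCuts_eq_add_one hC he (reachable_deleteEdges_of_cutUse_eq_zero hpC),
      ih fun D hD => (cutUse_le_cutUse_cons h p).trans (hp D hD), Walk.length_cons, Nat.cast_succ]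

variable (hconn : G.Connected) (h𝒞 : IsMulticutPartition G 𝒞)
  (hgeo : ∀ (u w : V) (p : G.Walk u w), p.length = G.dist u w → ∀ C ∈ 𝒞, cutUse G p C ≤ 1)

include hconn h𝒞 hgeo

theorem encard_separatingCuts_eq_dist (u w : V) :
    (separatingCuts G 𝒞 u w).encard = G.dist u w := by
  obtain ⟨p, hp⟩ := hconn.exists_walk_length_eq_dist u w
  rw [h𝒞.encard_separatingCuts_eq_length (hgeo u w p hp), hp]

theorem dist_eq_dist_add_one (hC : C ∈ 𝒞) (he : s(a, b) ∈ C)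
    (hbv : (G.deleteEdges C).Reachable b v) : G.dist a v = G.dist b v + 1 := by
  have hcard := h𝒞.encard_separatingCuts_eq_add_one hC he hbv
  simp only [encard_separatingCuts_eq_dist hconn h𝒞 hgeo] at hcard
  exact_mod_cast hcard

theorem eq_univ_of_gConvex {T : Set V} (hT : GConvex G T) (hne : T.Nonempty)
    (hmeets : ∀ C ∈ 𝒞, ∀ S, IsSide G C S → (S ∩ T).Nonempty) : T = Set.univ := by
  by_contra hT_ne
  obtain ⟨x, hx⟩ := hne
  obtain ⟨y, hy⟩ := (Set.ne_univ_iff_exists_notMem T).1 hT_ne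
  obtain ⟨p⟩ := hconn.preconnected x y
  obtain ⟨⟨⟨a, b⟩, hab⟩, -, ha, hb⟩ := p.exists_boundary_dart T hx hy
  obtain ⟨C, hC, he⟩ := h𝒞.exists_mem_of_adj hab
  obtain ⟨v, hvb, hv⟩ := hmeets C hC _ ⟨b, rfl⟩
  have hdist : G.dist a b + G.dist b v = G.dist a v := by
    rw [dist_eq_dist_add_one hconn h𝒞 hgeo hC he (Reachable.symm hvb),
      dist_eq_one_iff_adj.2 hab, add_comm]
  exact hb (hT a ha v hv b hdist)

end IsMulticutPartition

theorem hullSet_iff_meets_both_sides_general (hconn : G.Connected) {𝒞 : Set (Set (Sym2 V))}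
    (h𝒞 : IsMulticutPartition G 𝒞)
    (hgeo : ∀ (u w : V) (p : G.Walk u w), p.length = G.dist u w → ∀ C ∈ 𝒞, cutUse G p C ≤ 1)
    {V' : Set V} (hne : V'.Nonempty) :
    GConvexHull G V' = Set.univ ↔ ∀ C ∈ 𝒞, ∀ S, IsSide G C S → (S ∩ V').Nonempty := by
  rw [gConvexHull_eq_univ_iff]
  constructor
  · intro hhull C hC S hS
    by_contra hempty
    have hsub : V' ⊆ Sᶜ := fun x hxV hxS => hempty ⟨x, hxS, hxV⟩
    have hconv : GConvex G Sᶜ := hS.gConvex_compl hconn fun u w p hp => hgeo u w p hp C hC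
    exact hS.nonempty.ne_empty (Set.compl_univ_iff.1 (hhull Sᶜ hconv hsub))
  · intro hmeets T hT hsub
    exact h𝒞.eq_univ_of_gConvex hconn hgeo hT (hne.mono hsub) fun C hC S hS =>
      (hmeets C hC S hS).mono (Set.inter_subset_inter_right S hsub)

end

/-- For a cut-partition where no shortest path uses two edges of the same cut,
a (nonempty) vertex set is a hull set iff it meets both sides of every cut. -/
theorem hullSet_iff_meets_both_sides {V : Type*} [Fintype V] (G : SimpleGraph V)
    (hconn : G.Connected) (𝒞 : Set (Set (Sym2 V))) (hpart : IsCutPartition G 𝒞)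
    (hgeo : ∀ (u w : V) (p : G.Walk u w), p.length = G.dist u w →
      ∀ C ∈ 𝒞, cutUse G p C ≤ 1)
    (V' : Set V) (hne : V'.Nonempty) :
    GConvexHull G V' = Set.univ ↔
      ∀ C ∈ 𝒞, ∀ S : Set V, IsSide G C S → (S ∩ V').Nonempty :=
  hullSet_iff_meets_both_sides_general hconn hpart.isMulticutPartition hgeo hne
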